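/- Let (X,T) be a dynamical system and let x ∈ X be a point that is not isolated in X. Then the orbit Orb(x) is dense in X if and only if x is pseudo-ergodic. -/

import Mathlib

/-!
If `y` lies in a limit set of `x`, it is a limit of points of the orbit, so pseudo-ergodicity
gives density. Conversely, an isolated point of `X` would have to belong to the dense orbit, and
pulling it back by a power of `T` would make `x` isolated. Hence `X` is perfect, so the orbit stays
dense after deleting finitely many points. Every `y` is therefore a cluster point of `n ↦ Tⁿ x`
along the cofinite filter of `ℤ`, which is `atBot ⊔ atTop`; clustering along `atTop` puts `y` in
`L⁺(x)`, and clustering along `atBot` puts it in `L⁻(x)`.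
-/

open Filter Topology Set

/-- The `n`-th iterate of a homeomorphism `T` (negative `n` uses `T⁻¹`). -/
def iterate {X : Type*} [TopologicalSpace X] (T : X ≃ₜ X) (n : ℤ) (x : X) : X :=
  (T.toEquiv ^ n) x

/-- The limit set `L⁺(x)`. -/
def Lplus {X : Type*} [TopologicalSpace X] (T : X ≃ₜ X) (x : X) : Set X :=
  {y | ∃ h : ℕ → ℕ, Tendsto h atTop atTop ∧
    Tendsto (fun k => iterate T (h k : ℤ) x) atTop (𝓝 y)}

/-- The limit set `L⁻(x)`. -/
def Lminus {X : Type*} [TopologicalSpace X] (T : X ≃ₜ X) (x : X) : Set X :=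
  {y | ∃ h : ℕ → ℕ, Tendsto h atTop atTop ∧
    Tendsto (fun k => iterate T (-(h k : ℤ)) x) atTop (𝓝 y)}

/-- The orbit `Orb(x) = {Tⁿ x : n ∈ ℤ}`. -/
def orb {X : Type*} [TopologicalSpace X] (T : X ≃ₜ X) (x : X) : Set X :=
  Set.range fun n : ℤ => iterate T n x

theorem continuous_iterate {X : Type*} [TopologicalSpace X] (T : X ≃ₜ X) (n : ℤ) :
    Continuous (iterate T n) := by
  induction n using Int.induction_on with
  | zero => exact continuous_id
  | succ k ih =>
    have : iterate T (k + 1) = iterate T k ∘ T := by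
      funext x
      simp [iterate, zpow_add_one]
    rw [this]
    exact ih.comp T.continuous
  | pred k ih =>
    have : iterate T (-k - 1) = iterate T (-k) ∘ T.symm := by
      funext x
      simp only [iterate, zpow_sub_one]
      rfl
    rw [this]
    exact ih.comp T.symm.continuous

theorem iterate_injective {X : Type*} [TopologicalSpace X] (T : X ≃ₜ X) (n : ℤ) :
    Function.Injective (iterate T n) :=
  (T.toEquiv ^ n).injective

theorem perfect_of_dense_orb {X : Type*} [TopologicalSpace X] (T : X ≃ₜ X) (x : X)
    (hx : (𝓝[≠] x).NeBot) (hd : Dense (orb T x)) (y : X) : (𝓝[≠] y).NeBot := by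
  by_contra hy
  rw [not_neBot, ← isOpen_singleton_iff_punctured_nhds] at hy
  obtain ⟨_, rfl, n, hn⟩ := hd.exists_mem_open hy (singleton_nonempty y)
    |>.imp fun a h => And.intro (show a = y from h.2) h.1
  have h := hy.preimage (continuous_iterate T n)
  rw [← hn, ← image_singleton, preimage_image_eq _ (iterate_injective T n),
    isOpen_singleton_iff_punctured_nhds] at h
  exact hx.ne h

theorem mapClusterPt_cofinite_of_dense_orb {X : Type*} [TopologicalSpace X] [T1Space X]
    (T : X ≃ₜ X) (x : X) (hx : (𝓝[≠] x).NeBot) (hd : Dense (orb T x)) (y : X) :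
    MapClusterPt y cofinite (fun n : ℤ => iterate T n x) := by
  have := perfect_of_dense_orb T x hx hd
  rw [mapClusterPt_iff_frequently]
  intro s hs hfin
  simp only [not_not, eventually_cofinite] at hfin
  have hd' := hd.sdiff_finite (hfin.image fun n : ℤ => iterate T n x)
  obtain ⟨_, hzs, ⟨n, rfl⟩, hn⟩ := mem_closure_iff_nhds.1 (hd' y) s hs
  exact hn ⟨n, hzs, rfl⟩

theorem dense_orbit_iff_pseudoErgodic_of_not_isolated
    {X : Type*} [MetricSpace X] [CompactSpace X] (T : X ≃ₜ X) (x : X)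
    (hx : (𝓝[≠] x).NeBot) :
    Dense (orb T x) ↔ Lplus T x ∪ Lminus T x = Set.univ := by
  constructor
  · intro hd
    refine eq_univ_of_forall fun y => ?_
    have h := mapClusterPt_cofinite_of_dense_orb T x hx hd y
    rw [Int.cofinite_eq, MapClusterPt, map_sup, clusterPt_sup] at h
    rcases h with h | h
    · right
      -- `atBot` on `ℤ` is the image of `atTop` on `ℕ` under `k ↦ -k`.
      rw [← map_neg_atTop, ← Nat.map_cast_int_atTop, map_map, map_map] at h
      obtain ⟨φ, hφ, hlim⟩ := MapClusterPt.tendsto_subseq h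
      exact ⟨φ, hφ.tendsto_atTop, hlim⟩
    · left
      rw [← Nat.map_cast_int_atTop, map_map] at h
      obtain ⟨φ, hφ, hlim⟩ := MapClusterPt.tendsto_subseq h
      exact ⟨φ, hφ.tendsto_atTop, hlim⟩
  · intro h y
    rcases h.symm ▸ mem_univ y with ⟨φ, -, hlim⟩ | ⟨φ, -, hlim⟩
    · exact mem_closure_of_tendsto hlim (Eventually.of_forall fun k => ⟨_, rfl⟩)
    · exact mem_closure_of_tendsto hlim (Eventually.of_forall fun k => ⟨_, rfl⟩)
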